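/- arXiv:2603.17291 — 2 statements merged into one kernel-verified Lean document; each statement's English description precedes it below -/
import Mathlib

section
/- Let (Ω, μ) be a probability space, X ~ μ, and X₁, …, X_N independent copies of X. For every two measurable functions f, h : Ω → ℝ with finite first moments and every realization of (X_i)_{i=1}^N, one has W₁(F_{N,f+h}, F_{f+h}) ≤ W₁(F_{N,f}, F_f) + (1/N) Σ_{i=1}^N |h(X_i)| + 𝔼|h(X)|. -/
open MeasureTheory

noncomputable section

variable {Ω : Type*} [MeasurableSpace Ω]

/-- The `L₂(μ)` norm of a function. -/
def L2norm (μ : Measure Ω) (f : Ω → ℝ) : ℝ := Real.sqrt (∫ ω, (f ω) ^ 2 ∂μ)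

/-- The `L_p(μ)` norm of a function. -/
def Lpnorm (μ : Measure Ω) (p : ℝ) (f : Ω → ℝ) : ℝ := (∫ ω, |f ω| ^ p ∂μ) ^ (1 / p)

/-- The empirical `L₂` norm `||f||_{L₂(P_N)} = ((1/N) Σ_i f(X_i)²)^{1/2}`. -/
def empL2 {N : ℕ} (xs : Fin N → Ω) (f : Ω → ℝ) : ℝ :=
  Real.sqrt ((1 / (N : ℝ)) * ∑ i, (f (xs i)) ^ 2)

/-- The empirical distribution function `F_{N,f}` of the sample `(f(X_i))_{i ≤ N}`. -/
def empCDF {N : ℕ} (xs : Fin N → Ω) (f : Ω → ℝ) (t : ℝ) : ℝ :=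
  (({i | f (xs i) ≤ t} : Set (Fin N)).ncard : ℝ) / N

/-- The distribution function `F_f(t) = μ(f ≤ t)` of `f` under `μ`. -/
def trueCDF (μ : Measure Ω) (f : Ω → ℝ) (t : ℝ) : ℝ := (μ {ω | f ω ≤ t}).toReal

/-- Wasserstein-1 distance between two distribution functions. -/
def W1 (F H : ℝ → ℝ) : ℝ := ∫ t : ℝ, |F t - H t|

/-- The radius `d_F = sup_{f ∈ F} ||f||_{L₂(μ)}` of a class of functions. -/
def radius (μ : Measure Ω) (F : Set (Ω → ℝ)) : ℝ := ⨆ f ∈ F, L2norm μ f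

/-- Generalized inverse (quantile function) of a distribution function. -/
def quantile (F : ℝ → ℝ) (u : ℝ) : ℝ := sInf {t : ℝ | u ≤ F t}

/-- The `i`-th coordinate of the monotone nondecreasing rearrangement `v^♯` of `v`. -/
def orderStat {N : ℕ} (v : Fin N → ℝ) (i : Fin N) : ℝ :=
  sInf {t : ℝ | (i : ℕ) + 1 ≤ ({j | v j ≤ t} : Set (Fin N)).ncard}

/-- Talagrand's `γ₂` functional of the set `T` with respect to the distance `dst`:
the infimum over admissible sequences `(T_s)` (subsets of `T` with `|T₀| = 1` and
`|T_s| ≤ 2^(2^s)`) of `sup_{t ∈ T} Σ_s 2^(s/2) dist(t, T_s)`. -/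
def gamma2 {E : Type*} (dst : E → E → ℝ) (T : Set E) : ℝ :=
  sInf {r : ℝ | ∃ Ts : ℕ → Set E,
    (∀ s, Ts s ⊆ T) ∧ (Ts 0).ncard = 1 ∧ (∀ s, (Ts s).Finite ∧ (Ts s).ncard ≤ 2 ^ 2 ^ s) ∧
    r = ⨆ t ∈ T, ∑' s : ℕ, (2 : ℝ) ^ ((s : ℝ) / 2) * sInf (dst t '' Ts s)}

/-- The `L₂(μ)` distance on functions. -/
def L2dist (μ : Measure Ω) (f h : Ω → ℝ) : ℝ := L2norm μ (f - h)

end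

lemma inner_aux (a b : ℝ) :
    ∫⁻ t : ℝ, ‖(if a ≤ t then (1:ℝ) else 0) - (if b ≤ t then (1:ℝ) else 0)‖ₑ = ‖a - b‖ₑ := by
  have h1 : (fun t : ℝ => ‖(if a ≤ t then (1:ℝ) else 0) - (if b ≤ t then (1:ℝ) else 0)‖ₑ)
      = (Set.Ico (min a b) (max a b)).indicator (fun _ => (1 : ENNReal)) := by
    funext t
    by_cases h1 : a ≤ t <;> by_cases h2 : b ≤ t <;>
      simp [Set.indicator, h1, h2, not_le.mp]
  rw [h1, lintegral_indicator measurableSet_Ico]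
  simp only [lintegral_const, Measure.restrict_apply MeasurableSet.univ, Set.univ_inter, one_mul,
    Real.volume_Ico, max_sub_min_eq_abs]
  rw [← Real.enorm_eq_ofReal_abs, ← enorm_neg, neg_sub]

lemma trueCDF_meas {Ω : Type*} [MeasurableSpace Ω] (ν : Measure Ω) [IsProbabilityMeasure ν]
    (g : Ω → ℝ) : Measurable (trueCDF ν g) := by
  apply Monotone.measurable
  intro s t hst
  exact measureReal_mono (fun ω (hω : g ω ≤ s) => hω.trans hst)

lemma trueCDF_eq {Ω : Type*} [MeasurableSpace Ω] (ν : Measure Ω) [IsProbabilityMeasure ν]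
    (g : Ω → ℝ) (hg : Measurable g) (t : ℝ) :
    trueCDF ν g t = ∫ ω, (if g ω ≤ t then (1:ℝ) else 0) ∂ν := by
  have : (fun ω => if g ω ≤ t then (1:ℝ) else 0) = {ω | g ω ≤ t}.indicator 1 := by
    funext ω; simp [Set.indicator]
  have hms : MeasurableSet {ω | g ω ≤ t} := hg measurableSet_Iic
  rw [this, integral_indicator_one hms]
  rfl

lemma trueCDF_int {Ω : Type*} [MeasurableSpace Ω] (ν : Measure Ω) [IsProbabilityMeasure ν]
    (g : Ω → ℝ) (hg : Measurable g) (t : ℝ) :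
    Integrable (fun ω => if g ω ≤ t then (1:ℝ) else 0) ν := by
  have : (fun ω => if g ω ≤ t then (1:ℝ) else 0) = {ω | g ω ≤ t}.indicator 1 := by
    funext ω; simp [Set.indicator]
  have hms : MeasurableSet {ω | g ω ≤ t} := hg measurableSet_Iic
  rw [this, integrable_indicator_iff hms]
  exact (integrable_const (1:ℝ)).integrableOn

lemma key_lint {Ω : Type*} [MeasurableSpace Ω] (ν : Measure Ω) [IsProbabilityMeasure ν]
    (g k : Ω → ℝ) (hg : Measurable g) (hk : Measurable k) :
    ∫⁻ t, ‖trueCDF ν g t - trueCDF ν k t‖ₑ ≤ ∫⁻ ω, ‖g ω - k ω‖ₑ ∂ν := by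
  calc ∫⁻ t, ‖trueCDF ν g t - trueCDF ν k t‖ₑ
      ≤ ∫⁻ t, ∫⁻ ω, ‖(if g ω ≤ t then (1:ℝ) else 0) - (if k ω ≤ t then (1:ℝ) else 0)‖ₑ ∂ν := by
        apply lintegral_mono
        intro t
        dsimp only
        rw [trueCDF_eq ν g hg, trueCDF_eq ν k hk,
          ← integral_sub (trueCDF_int ν g hg t) (trueCDF_int ν k hk t)]
        exact enorm_integral_le_lintegral_enorm _
    _ = ∫⁻ ω, (∫⁻ t : ℝ,
          ‖(if g ω ≤ t then (1:ℝ) else 0) - (if k ω ≤ t then (1:ℝ) else 0)‖ₑ) ∂ν := by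
        apply lintegral_lintegral_swap
        apply Measurable.aemeasurable
        apply Measurable.enorm
        apply Measurable.sub
        · exact Measurable.ite (measurableSet_le (hg.comp measurable_snd) measurable_fst)
            measurable_const measurable_const
        · exact Measurable.ite (measurableSet_le (hk.comp measurable_snd) measurable_fst)
            measurable_const measurable_const
    _ = _ := by simp only [inner_aux]

lemma key_int {Ω : Type*} [MeasurableSpace Ω] (ν : Measure Ω) [IsProbabilityMeasure ν]
    (g k : Ω → ℝ) (hg : Measurable g) (hk : Measurable k)
    (hi : Integrable (fun ω => g ω - k ω) ν) :
    Integrable (fun t => trueCDF ν g t - trueCDF ν k t) ∧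
    ∫ t, |trueCDF ν g t - trueCDF ν k t| ≤ ∫ ω, |g ω - k ω| ∂ν := by
  have hm : AEStronglyMeasurable (fun t => trueCDF ν g t - trueCDF ν k t) volume :=
    ((trueCDF_meas ν g).sub (trueCDF_meas ν k)).aestronglyMeasurable
  have hkey := key_lint ν g k hg hk
  refine ⟨⟨hm, hkey.trans_lt hi.2⟩, ?_⟩
  simp only [← Real.norm_eq_abs]
  rw [integral_norm_eq_lintegral_enorm hm, integral_norm_eq_lintegral_enorm hi.1]
  exact ENNReal.toReal_mono hi.2.ne hkey

lemma trueCDF_zero {Ω : Type*} [MeasurableSpace Ω] (ν : Measure Ω) [IsProbabilityMeasure ν]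
    (t : ℝ) : trueCDF ν (fun _ => 0) t = if 0 ≤ t then 1 else 0 := by
  unfold trueCDF
  by_cases h : 0 ≤ t <;> simp [h]

lemma emp_aux (N : ℕ) (hN : N ≠ 0) : ∃ ν : Measure (Fin N), IsProbabilityMeasure ν ∧
    (∀ v : Fin N → ℝ, ∫ i, v i ∂ν = (1 / (N:ℝ)) * ∑ i, v i) := by
  have hN' : (N : ENNReal) ≠ 0 := by exact_mod_cast hN
  refine ⟨(N : ENNReal)⁻¹ • Measure.count, ⟨?_⟩, fun v => ?_⟩
  · simp [Measure.count_apply, ENNReal.inv_mul_cancel hN' (ENNReal.natCast_ne_top N)]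
  · rw [integral_smul_measure, integral_count]
    simp

lemma emp_eq {Ω : Type*} {N : ℕ} (ν : Measure (Fin N)) [IsProbabilityMeasure ν]
    (hν : ∀ v : Fin N → ℝ, ∫ i, v i ∂ν = (1 / (N:ℝ)) * ∑ i, v i)
    (xs : Fin N → Ω) (f : Ω → ℝ) :
    empCDF xs f = trueCDF ν (fun i => f (xs i)) := by
  funext t
  rw [trueCDF_eq ν _ (measurable_of_countable _), hν, empCDF, Set.ncard_eq_toFinset_card']
  simp [div_eq_inv_mul]

theorem stmt9 {Ω : Type*} [MeasurableSpace Ω] (μ : Measure Ω) [IsProbabilityMeasure μ]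
    (N : ℕ) (f h : Ω → ℝ) (hf : Measurable f) (hh : Measurable h)
    (hfi : Integrable f μ) (hhi : Integrable h μ) (xs : Fin N → Ω) :
    W1 (empCDF xs (f + h)) (trueCDF μ (f + h)) ≤
      W1 (empCDF xs f) (trueCDF μ f) + (1 / (N : ℝ)) * ∑ i, |h (xs i)| + ∫ ω, |h ω| ∂μ := by
  by_cases hN : N = 0
  · subst hN
    have h0 : W1 (empCDF xs (f + h)) (trueCDF μ (f + h)) = 0 := by
      apply integral_undef
      intro hc
      have hz := (key_int μ (f + h) (fun _ => 0) (hf.add hh) measurable_const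
        (by simpa only [sub_zero] using hfi.add hhi)).1
      have hc' : Integrable (trueCDF μ (f + h)) := by
        have h2 : (fun t => |empCDF xs (f + h) t - trueCDF μ (f + h) t|)
            = trueCDF μ (f + h) := by
          funext t
          simp [empCDF, trueCDF]
        rwa [h2] at hc
      have h3 := hc'.sub hz
      have h4 : (trueCDF μ (f + h) - fun t => trueCDF μ (f + h) t - trueCDF μ (fun _ => 0) t)
          = (Set.Ici (0:ℝ)).indicator (fun _ => (1:ℝ)) := by
        funext t
        simp [trueCDF_zero, Set.indicator]
      rw [h4, integrable_indicator_iff measurableSet_Ici] at h3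
      rw [integrableOn_const_iff] at h3
      simp at h3
    rw [h0]
    have h1 : 0 ≤ W1 (empCDF xs f) (trueCDF μ f) := integral_nonneg fun _ => abs_nonneg _
    have h2 : 0 ≤ ∫ ω, |h ω| ∂μ := integral_nonneg fun _ => abs_nonneg _
    simp only [Finset.univ_eq_empty, Finset.sum_empty, mul_zero, add_zero]
    linarith
  · obtain ⟨ν, hp, hν⟩ := emp_aux N hN
    have hvm : ∀ v : Fin N → ℝ, Measurable v := fun v => measurable_of_countable v
    obtain ⟨a1, a2⟩ := key_int ν (fun i => (f + h) (xs i)) (fun i => f (xs i)) (hvm _) (hvm _)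
      (Integrable.of_finite)
    obtain ⟨b1, b2⟩ := key_int μ f (f + h) hf (hf.add hh) (by simpa using hhi)
    have c1 := (key_int ν (fun i => f (xs i)) (fun _ => 0) (hvm _) (hvm _)
      (Integrable.of_finite)).1
    have d1 := (key_int μ f (fun _ => 0) hf measurable_const (by simpa using hfi)).1
    have e1 : Integrable (fun t => trueCDF ν (fun i => f (xs i)) t - trueCDF μ f t) := by
      refine (c1.sub d1).congr (Filter.Eventually.of_forall fun t => ?_)
      simp [trueCDF_zero]
    rw [hν] at a2
    simp only [Pi.add_apply, add_sub_cancel_left, sub_add_cancel_left, abs_neg] at a2 b2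
    rw [emp_eq ν hν, emp_eq ν hν]
    simp only [W1]
    have step : ∫ t, |trueCDF ν (fun i => (f + h) (xs i)) t - trueCDF μ (f + h) t| ≤
        ∫ t, ((|trueCDF ν (fun i => f (xs i)) t - trueCDF μ f t| +
          |trueCDF ν (fun i => (f + h) (xs i)) t - trueCDF ν (fun i => f (xs i)) t|) +
          |trueCDF μ f t - trueCDF μ (f + h) t|) := by
      apply integral_mono_of_nonneg
      · exact Filter.Eventually.of_forall fun _ => abs_nonneg _
      · exact (e1.abs.add a1.abs).add b1.abs
      · refine Filter.Eventually.of_forall fun t => ?_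
        dsimp only
        refine le_trans (le_of_eq ?_) ((abs_add_le _ _).trans
          (add_le_add_left (abs_add_le _ _) _))
        congr 1
        ring
    have i1 : Integrable (fun t => |trueCDF ν (fun i => f (xs i)) t - trueCDF μ f t| +
        |trueCDF ν (fun i => (f + h) (xs i)) t - trueCDF ν (fun i => f (xs i)) t|) :=
      e1.abs.add a1.abs
    rw [integral_add i1 b1.abs, integral_add e1.abs a1.abs] at step
    simp only [Pi.add_apply] at step ⊢
    linarith
end

section
/- Let (Ω, μ) be a probability space, X ~ μ, and X₁, …, X_N independent copies of X. Let m > 0 and M ≥ 1, and let h : Ω → ℝ be measurable with ||h||_{L₂} ≤ m and ||h||_{L_∞} ≤ mM. Then 𝔼 W₁(F_{N,h}, F_h) ≤ 2m · log(eM)/√N. -/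
open MeasureTheory

open ProbabilityTheory in
lemma aux_g_int (m M : ℝ) (hm : 0 < m) (hM : 1 ≤ M) :
    ∫ t in (-(m*M))..(m*M), m / max m |t| = 2 * m * Real.log (Real.exp 1 * M) := by
  have hc : Continuous (fun t : ℝ => m / max m |t|) :=
    continuous_const.div (by fun_prop) (fun t => (lt_max_of_lt_left hm).ne')
  have hi : ∀ a b : ℝ, IntervalIntegrable (fun t : ℝ => m / max m |t|) volume a b :=
    fun a b => hc.intervalIntegrable a b
  have hmM : m ≤ m * M := le_mul_of_one_le_right hm.le hM
  have h1 : ∫ t in (0:ℝ)..m, m / max m |t| = m := by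
    rw [intervalIntegral.integral_congr (g := fun _ => (1:ℝ))]
    · simp
    · intro t ht
      rw [Set.uIcc_of_le hm.le] at ht
      simp only
      rw [abs_of_nonneg ht.1, max_eq_left ht.2, div_self hm.ne']
  have h2 : ∫ t in m..(m*M), m / max m |t| = m * Real.log M := by
    rw [intervalIntegral.integral_congr (g := fun t => m * (1 / t))]
    · rw [intervalIntegral.integral_const_mul, integral_one_div_of_pos hm (by positivity)]
      congr 2
      field_simp
    · intro t ht
      rw [Set.uIcc_of_le hmM] at ht
      simp only
      rw [abs_of_nonneg (hm.le.trans ht.1), max_eq_right ht.1]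
      ring
  have h3 : ∫ t in (0:ℝ)..(m*M), m / max m |t| = m + m * Real.log M := by
    rw [← intervalIntegral.integral_add_adjacent_intervals (hi 0 m) (hi m _), h1, h2]
  have h4 : ∫ t in (-(m*M))..0, m / max m |t| = m + m * Real.log M := by
    rw [← h3]
    have := intervalIntegral.integral_comp_neg (a := 0) (b := m * M) (fun t : ℝ => m / max m |t|)
    simp only [abs_neg, neg_zero] at this
    exact this.symm
  rw [← intervalIntegral.integral_add_adjacent_intervals (hi _ 0) (hi 0 _), h3, h4,
    Real.log_mul (Real.exp_pos 1).ne' (by positivity), Real.log_exp]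
  ring

lemma aux_empCDF {Ω : Type*} {N : ℕ} (xs : Fin N → Ω) (h : Ω → ℝ) (t : ℝ) :
    empCDF xs h t = (∑ i, ({ω | h ω ≤ t} : Set Ω).indicator (fun _ => (1:ℝ)) (xs i)) / N := by
  classical
  unfold empCDF
  congr 1
  simp only [Set.indicator_apply, Set.mem_setOf_eq, Finset.sum_boole]
  rw [Set.ncard_eq_toFinset_card']
  simp

lemma aux_meas {Ω : Type*} [MeasurableSpace Ω] (μ : Measure Ω) [IsProbabilityMeasure μ]
    (N : ℕ) (h : Ω → ℝ) (hmeas : Measurable h) :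
    Measurable (fun p : (Fin N → Ω) × ℝ => empCDF p.1 h p.2 - trueCDF μ h p.2) := by
  apply Measurable.sub
  · simp only [aux_empCDF]
    refine Measurable.div_const (Finset.measurable_sum _ fun i _ => ?_) _
    have : MeasurableSet {p : (Fin N → Ω) × ℝ | h (p.1 i) ≤ p.2} :=
      measurableSet_le (hmeas.comp ((measurable_pi_apply i).comp measurable_fst)) measurable_snd
    exact (measurable_const (a := (1:ℝ))).indicator this
  · have : Monotone (trueCDF μ h) := fun a b hab =>
      measureReal_mono (μ := μ) (fun ω hω => le_trans hω hab)
    exact this.measurable.comp measurable_snd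

open ProbabilityTheory in
lemma aux_second {Ω : Type*} [MeasurableSpace Ω] (μ : Measure Ω) [IsProbabilityMeasure μ]
    (N : ℕ) (hN : 0 < N) (h : Ω → ℝ) (hmeas : Measurable h) (t : ℝ) :
    ∫ xs, |empCDF xs h t - trueCDF μ h t| ∂(Measure.pi fun _ : Fin N => μ) ≤
      Real.sqrt (trueCDF μ h t * (1 - trueCDF μ h t)) / Real.sqrt N := by
  set A : Set Ω := {ω | h ω ≤ t} with hA
  have hAm : MeasurableSet A := hmeas measurableSet_Iic
  set Y : Ω → ℝ := A.indicator (fun _ => (1:ℝ)) with hY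
  have hYm : MemLp Y 2 μ := memLp_indicator_const 2 hAm 1 (Or.inr (measure_ne_top _ _))
  have hEY : ∫ ω, Y ω ∂μ = trueCDF μ h t := by
    rw [hY, integral_indicator_const _ hAm]; simp [trueCDF, Measure.real, hA]
  have hVY : variance Y μ = trueCDF μ h t * (1 - trueCDF μ h t) := by
    rw [variance_eq_sub hYm]
    have : Y ^ 2 = Y := by
      ext ω; by_cases hω : ω ∈ A <;> simp [hY, hω]
    rw [this, hEY]; ring
  set P := Measure.pi fun _ : Fin N => μ with hP
  have hmp : ∀ i : Fin N, MeasurePreserving (fun xs : Fin N → Ω => xs i) P μ :=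
    fun i => measurePreserving_eval (fun _ : Fin N => μ) i
  have hYi : ∀ i : Fin N, MemLp (fun xs : Fin N → Ω => Y (xs i)) 2 P :=
    fun i => hYm.comp_measurePreserving (hmp i)
  have hS : MemLp (fun xs : Fin N → Ω => ∑ i, Y (xs i)) 2 P := memLp_finset_sum _ fun i _ => hYi i
  have hVS : variance (∑ i, fun xs : Fin N → Ω => Y (xs i)) P =
      N * (trueCDF μ h t * (1 - trueCDF μ h t)) := by
    rw [variance_sum_pi (fun _ => hYm)]
    simp [hVY]
  have hES : ∫ xs, ∑ i, Y (xs i) ∂P = N * trueCDF μ h t := by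
    rw [integral_finset_sum _ fun i _ => (hYi i).integrable (by norm_num)]
    have : ∀ i : Fin N, ∫ xs, Y (xs i) ∂P = trueCDF μ h t := fun i => by
      rw [← hEY]; exact integral_comp_eval (μ := fun _ : Fin N => μ) (i := i) hYm.1
    simp [this]
  have hN' : (0:ℝ) < N := by exact_mod_cast hN
  set D : (Fin N → Ω) → ℝ := fun xs => empCDF xs h t - trueCDF μ h t with hD
  have hDeq : D = fun xs => (∑ i, Y (xs i)) / N - trueCDF μ h t := by
    ext xs; simp only [hD, aux_empCDF, hY, hA]
  have hDm : MemLp D 2 P := by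
    rw [hDeq]
    have := (hS.const_mul ((N:ℝ)⁻¹)).sub (memLp_const (trueCDF μ h t))
    convert this using 1
    ext xs; simp [div_eq_inv_mul]
  have hD2 : ∫ xs, D xs ^ 2 ∂P = (trueCDF μ h t * (1 - trueCDF μ h t)) / N := by
    rw [variance_eq_integral (by
      have := hS.1.aemeasurable
      convert this using 1; ext xs; simp)] at hVS
    simp only [Finset.sum_apply, hES] at hVS
    have : ∀ xs, D xs ^ 2 = (1/(N:ℝ)^2) * (∑ i, Y (xs i) - N * trueCDF μ h t)^2 := fun xs => by
      rw [hDeq]; field_simp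
    simp only [this, integral_const_mul, hVS]
    field_simp
  have hDabs : MemLp (fun xs => |D xs|) 2 P := hDm.norm
  have key : (∫ xs, |D xs| ∂P) ^ 2 ≤ ∫ xs, D xs ^ 2 ∂P := by
    have h0 := variance_nonneg (fun xs => |D xs|) P
    rw [variance_eq_sub hDabs] at h0
    simp only [Pi.pow_apply, sq_abs] at h0
    linarith
  rw [← Real.sqrt_div' _ hN'.le, ← hD2]
  exact Real.le_sqrt_of_sq_le key

lemma aux_bound {Ω : Type*} [MeasurableSpace Ω] (μ : Measure Ω) [IsProbabilityMeasure μ]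
    (m M : ℝ) (hm : 0 < m) (h : Ω → ℝ) (hmeas : Measurable h)
    (hL2 : L2norm μ h ≤ m) (hLinf : ∀ᵐ ω ∂μ, |h ω| ≤ m * M) (t : ℝ) :
    Real.sqrt (trueCDF μ h t * (1 - trueCDF μ h t)) ≤
      (Set.Icc (-(m*M)) (m*M)).indicator (fun t => m / max m |t|) t := by
  have h0 : 0 ≤ trueCDF μ h t := measureReal_nonneg
  have h1 : trueCDF μ h t ≤ 1 := measureReal_le_one (μ := μ)
  have hcompl : 1 - trueCDF μ h t = μ.real {ω | t < h ω} := by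
    have := probReal_compl_eq_one_sub (μ := μ) (s := {ω | h ω ≤ t}) (hmeas measurableSet_Iic)
    have e : {ω | h ω ≤ t}ᶜ = {ω | t < h ω} := by ext; simp
    rw [e] at this
    rw [this]; rfl
  by_cases ht : t ∈ Set.Icc (-(m*M)) (m*M)
  · rw [Set.indicator_of_mem ht]
    have hp : 0 < max m |t| := lt_max_of_lt_left hm
    rw [Real.sqrt_le_left (by positivity)]
    rcases le_total |t| m with hle | hle
    · rw [max_eq_left hle, div_self hm.ne']; nlinarith
    · rw [max_eq_right hle]
      have htp : 0 < |t| := hm.trans_le hle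
      have hint : Integrable (fun ω => (h ω)^2) μ := by
        refine Integrable.of_bound (C := (m*M)^2) (hmeas.pow_const 2).aestronglyMeasurable ?_
        filter_upwards [hLinf] with ω hω
        rw [Real.norm_eq_abs, abs_pow]
        gcongr
      have hE : ∫ ω, (h ω)^2 ∂μ ≤ m^2 := by
        unfold L2norm at hL2
        exact (Real.sqrt_le_left hm.le).1 hL2
      have hmk := mul_meas_ge_le_integral_of_nonneg (Filter.Eventually.of_forall fun ω => sq_nonneg (h ω)) hint (t^2)
      have hq : μ.real {ω | t^2 ≤ h ω ^ 2} ≤ (m/|t|)^2 := by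
        rw [div_pow, sq_abs, le_div_iff₀ (by rw [← sq_abs]; positivity)]
        linarith
      refine le_trans ?_ hq
      rcases le_total 0 t with h2 | h2
      · have : μ.real {ω | t < h ω} ≤ μ.real {ω | t^2 ≤ h ω ^ 2} :=
          measureReal_mono fun ω hω => by
            simp only [Set.mem_setOf_eq] at *; nlinarith
        rw [hcompl] at *
        have := measureReal_nonneg (μ := μ) (s := {ω | t < h ω})
        nlinarith
      · have : trueCDF μ h t ≤ μ.real {ω | t^2 ≤ h ω ^ 2} :=
          measureReal_mono (μ := μ) fun ω hω => by
            simp only [Set.mem_setOf_eq] at *; nlinarith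
        nlinarith
  · rw [Set.indicator_of_notMem ht]
    have : trueCDF μ h t * (1 - trueCDF μ h t) = 0 := by
      rw [Set.mem_Icc, not_and_or, not_le, not_le] at ht
      rcases ht with ht | ht
      · have : trueCDF μ h t = 0 := by
          have : μ {ω | h ω ≤ t} = 0 := by
            rw [measure_eq_zero_iff_ae_notMem]
            filter_upwards [hLinf] with ω hω h3
            have h4 : h ω ≤ t := h3
            linarith [(abs_le.1 hω).1]
          simp [trueCDF, this]
        simp [this]
      · have : μ {ω | t < h ω} = 0 := by
          rw [measure_eq_zero_iff_ae_notMem]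
          filter_upwards [hLinf] with ω hω h3
          have h4 : t < h ω := h3
          linarith [(abs_le.1 hω).2]
        rw [hcompl]; simp [Measure.real, this]
    rw [this]; simp

lemma aux_zero {Ω : Type*} [MeasurableSpace Ω] (μ : Measure Ω) [IsProbabilityMeasure μ]
    (h : Ω → ℝ) (c : ℝ) (hLinf : ∀ᵐ ω ∂μ, |h ω| ≤ c)
    (xs : Fin 0 → Ω) : W1 (empCDF xs h) (trueCDF μ h) = 0 := by
  unfold W1
  apply integral_undef
  intro hi
  have h2 : Integrable (fun _ : ℝ => (1:ℝ)) (volume.restrict (Set.Ici c)) := by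
    refine (hi.integrableOn (s := Set.Ici c)).congr ?_
    filter_upwards [ae_restrict_mem measurableSet_Ici] with t ht
    have : μ {ω | h ω ≤ t} = 1 := by
      refine (measure_congr (Filter.eventuallyEq_univ.2 ?_)).trans measure_univ
      filter_upwards [hLinf] with ω hω
      exact (abs_le.1 hω).2.trans ht
    simp [empCDF, trueCDF, this]
  rw [integrable_const_iff] at h2
  simp [isFiniteMeasure_iff] at h2

theorem stmt11 {Ω : Type*} [MeasurableSpace Ω] (μ : Measure Ω) [IsProbabilityMeasure μ]
    (N : ℕ) (m M : ℝ) (hm : 0 < m) (hM : 1 ≤ M) (h : Ω → ℝ) (hmeas : Measurable h)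
    (hL2 : L2norm μ h ≤ m) (hLinf : ∀ᵐ ω ∂μ, |h ω| ≤ m * M) :
    (∫ xs, W1 (empCDF xs h) (trueCDF μ h) ∂(Measure.pi fun _ : Fin N => μ)) ≤
      2 * m * Real.log (Real.exp 1 * M) / Real.sqrt N := by
  rcases Nat.eq_zero_or_pos N with rfl | hN
  · simp [aux_zero μ h _ hLinf]
  set P := Measure.pi fun _ : Fin N => μ with hP
  set g : ℝ → ℝ := (Set.Icc (-(m*M)) (m*M)).indicator (fun t => m / max m |t|) with hg
  have hmM : 0 < m * M := by positivity
  have hc : Continuous (fun t : ℝ => m / max m |t|) :=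
    continuous_const.div (by fun_prop) (fun t => (lt_max_of_lt_left hm).ne')
  have hgi : Integrable g := (hc.continuousOn.integrableOn_Icc).integrable_indicator measurableSet_Icc
  have hg0 : ∀ t, 0 ≤ g t := fun t => Set.indicator_nonneg (fun t _ => by positivity) t
  have hgint : ∫ t, g t = 2 * m * Real.log (Real.exp 1 * M) := by
    rw [← aux_g_int m M hm hM, hg, integral_indicator measurableSet_Icc,
      integral_Icc_eq_integral_Ioc, intervalIntegral.integral_of_le (by linarith)]
  have hJ := aux_meas μ N h hmeas
  have hR : 0 ≤ 2 * m * Real.log (Real.exp 1 * M) / Real.sqrt N := by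
    rw [← hgint]; exact div_nonneg (integral_nonneg hg0) (Real.sqrt_nonneg _)
  have hpt : ∀ t, ∫⁻ xs, ‖empCDF xs h t - trueCDF μ h t‖ₑ ∂P ≤ ENNReal.ofReal (g t / Real.sqrt N) := by
    intro t
    have hb : Integrable (fun xs : Fin N → Ω => empCDF xs h t - trueCDF μ h t) P := by
      refine Integrable.of_bound (C := 2) (hJ.comp (measurable_id.prodMk measurable_const)).aestronglyMeasurable ?_
      refine Filter.Eventually.of_forall fun xs => ?_
      have h0 : 0 ≤ trueCDF μ h t := measureReal_nonneg
      have h1 : trueCDF μ h t ≤ 1 := measureReal_le_one (μ := μ)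
      have h2 : 0 ≤ empCDF xs h t := by unfold empCDF; positivity
      have h3 : empCDF xs h t ≤ 1 := by
        unfold empCDF
        apply div_le_one_of_le₀ _ (by positivity)
        have := Set.ncard_le_card ({i | h (xs i) ≤ t} : Set (Fin N))
        simp only [Nat.card_eq_fintype_card, Fintype.card_fin] at this
        exact_mod_cast this
      simp only [id, Real.norm_eq_abs]
      rw [abs_le]; constructor <;> linarith
    rw [← ofReal_integral_norm_eq_lintegral_enorm hb]
    apply ENNReal.ofReal_le_ofReal
    refine (aux_second μ N hN h hmeas t).trans ?_
    gcongr
    exact aux_bound μ m M hm h hmeas hL2 hLinf t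
  have hfin : ‖∫ xs, W1 (empCDF xs h) (trueCDF μ h) ∂P‖ₑ ≤
      ENNReal.ofReal (2 * m * Real.log (Real.exp 1 * M) / Real.sqrt N) := by
    calc _ ≤ ∫⁻ xs, ‖W1 (empCDF xs h) (trueCDF μ h)‖ₑ ∂P := enorm_integral_le_lintegral_enorm _
      _ ≤ ∫⁻ xs, (∫⁻ t, ‖empCDF xs h t - trueCDF μ h t‖ₑ) ∂P := by
        refine lintegral_mono fun xs => ?_
        unfold W1
        refine (enorm_integral_le_lintegral_enorm _).trans (le_of_eq ?_)
        simp
      _ = ∫⁻ t, ∫⁻ xs, ‖empCDF xs h t - trueCDF μ h t‖ₑ ∂P :=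
        lintegral_lintegral_swap hJ.enorm.aemeasurable
      _ ≤ ∫⁻ t, ENNReal.ofReal (g t / Real.sqrt N) := lintegral_mono hpt
      _ = _ := by
        rw [← ofReal_integral_eq_lintegral_ofReal (hgi.div_const _)
          (Filter.Eventually.of_forall fun t => div_nonneg (hg0 t) (Real.sqrt_nonneg _)),
          integral_div, hgint]
  rw [Real.enorm_eq_ofReal_abs, ENNReal.ofReal_le_ofReal_iff hR] at hfin
  exact (le_abs_self _).trans hfin
end
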